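/- Let (W, S) be an arbitrary Coxeter system and let w ∈ W_c be fully commutative. If w is left star reducible or right star reducible to x ∈ W_c, then n(x) = n(w). -/

import Mathlib

open CoxeterSystem

variable {B W : Type*} [Group W] {M : CoxeterMatrix B} (cs : CoxeterSystem M W)

/-- `m(s,t) ≥ 3`: `s` and `t` are distinct noncommuting generators
(`M s t = 0` encodes `m(s,t) = ∞`). -/
def Noncomm (M : CoxeterMatrix B) (s t : B) : Prop := M s t = 0 ∨ 3 ≤ M s t

/-- The longest element `w_{st}` of the rank-2 parabolic subgroup `⟨s,t⟩`
(meaningful when `3 ≤ M s t < ∞`). -/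
def longest (s t : B) : W := cs.wordProd (alternatingWord s t (M s t))

/-- `w` is complex: it admits a reduced factorization `x₁ · w_{st} · x₂` where `w_{st}`
is the longest element of a rank-2 parabolic subgroup `⟨s,t⟩` with `3 ≤ m(s,t) < ∞`. -/
def IsComplex (w : W) : Prop :=
  ∃ s t : B, 3 ≤ M s t ∧ ∃ x₁ x₂ : W,
    w = x₁ * longest cs s t * x₂ ∧
    cs.length w = cs.length x₁ + cs.length (longest cs s t : W) + cs.length x₂

/-- `w` is fully commutative, i.e. `w ∈ W_c`. -/
def FullyComm (w : W) : Prop := ¬ IsComplex cs w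

/-- `x` is weakly complex: `x` is complex and `x = s·u` reduced with `u` fully commutative. -/
def IsWeaklyComplex (x : W) : Prop :=
  IsComplex cs x ∧ ∃ (s : B) (u : W), FullyComm cs u ∧ x = cs.simple s * u ∧
    cs.length x = 1 + cs.length u

/-- The alternating product `t s t s ⋯` with `k` factors, beginning with `t`. -/
def altProd (t s : B) (k : ℕ) : W :=
  cs.wordProd ((List.range k).map (fun i => if i % 2 = 0 then t else s))

/-- The left descent set `𝓛(w)`. -/
def leftDescents (w : W) : Set B := {i | cs.IsLeftDescent w i}

/-- The right descent set `𝓡(w)`. -/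
def rightDescents (w : W) : Set B := {i | cs.IsRightDescent w i}

/-- `w` is a reduced product of distinct pairwise commuting generators. -/
def IsCommProd (w : W) : Prop :=
  ∃ l : List B, l.Nodup ∧ (∀ u ∈ l, ∀ u' ∈ l, u ≠ u' → M u u' = 2) ∧
    cs.IsReduced l ∧ w = cs.wordProd l

/-- `y` is left star reducible to `x` with respect to the pair `{s,t}`:
`x` and `y` lie in the same left `{s,t}`-string and `ℓ(x) = ℓ(y) − 1`. -/
def LeftStarReducible (s t : B) (y x : W) : Prop :=
  Noncomm M s t ∧
  ((cs.IsLeftDescent y s ∧ ¬ cs.IsLeftDescent y t ∧ x = cs.simple s * y ∧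
      cs.IsLeftDescent x t) ∨
   (cs.IsLeftDescent y t ∧ ¬ cs.IsLeftDescent y s ∧ x = cs.simple t * y ∧
      cs.IsLeftDescent x s))

/-- `y` is right star reducible to `x` with respect to the pair `{s,t}`. -/
def RightStarReducible (s t : B) (y x : W) : Prop :=
  Noncomm M s t ∧
  ((cs.IsRightDescent y s ∧ ¬ cs.IsRightDescent y t ∧ x = y * cs.simple s ∧
      cs.IsRightDescent x t) ∨
   (cs.IsRightDescent y t ∧ ¬ cs.IsRightDescent y s ∧ x = y * cs.simple t ∧
      cs.IsRightDescent x s))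

/-- `y` is star reducible to `x`: there is a (possibly empty) chain of left and right
star reductions from `y` to `x`. -/
def StarReducible (y x : W) : Prop :=
  Relation.ReflTransGen
    (fun a b => ∃ s t : B, LeftStarReducible cs s t a b ∨ RightStarReducible cs s t a b) y x

/-- Property F: every fully commutative element is star reducible to a reduced product of
distinct pairwise commuting generators. -/
def PropertyF : Prop := ∀ w : W, FullyComm cs w → ∃ x : W, StarReducible cs w x ∧ IsCommProd cs x

/-- `n(w)`: the maximum `k` such that `w` admits a reduced factorization `w = w₁·w₂·w₃`
with `w₂` a reduced product of `k` distinct pairwise commuting generators. -/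
noncomputable def nval (w : W) : ℕ :=
  sSup {k | ∃ w₁ w₂ w₃ : W, w = w₁ * w₂ * w₃ ∧
    cs.length w = cs.length w₁ + cs.length w₂ + cs.length w₃ ∧
    IsCommProd cs w₂ ∧ cs.length w₂ = k}

/-- The Bruhat order: `x ≤ w` iff some reduced word for `w` has a subword that is a
reduced word for `x`. -/
def BruhatLE (x w : W) : Prop :=
  ∃ l l' : List B, cs.IsReduced l ∧ cs.wordProd l = w ∧
    l'.Sublist l ∧ cs.IsReduced l' ∧ cs.wordProd l' = x

/-- `w = wI · wII` is the coset decomposition of `w` with respect to `I = {s,t}`: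
`wI ∈ W_I`, `𝓛(wII) ∩ I = ∅` and `ℓ(w) = ℓ(wI) + ℓ(wII)`. -/
def CosetDecompL (s t : B) (w wI wII : W) : Prop :=
  w = wI * wII ∧ wI ∈ Subgroup.closure {cs.simple s, cs.simple t} ∧
  ¬ cs.IsLeftDescent wII s ∧ ¬ cs.IsLeftDescent wII t ∧
  cs.length w = cs.length wI + cs.length wII

/-- `w = wII · wI` is the right coset decomposition of `w` with respect to `I = {s,t}`:
`wI ∈ W_I`, `𝓡(wII) ∩ I = ∅` and `ℓ(w) = ℓ(wII) + ℓ(wI)`. -/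
def CosetDecompR (s t : B) (w wII wI : W) : Prop :=
  w = wII * wI ∧ wI ∈ Subgroup.closure {cs.simple s, cs.simple t} ∧
  ¬ cs.IsRightDescent wII s ∧ ¬ cs.IsRightDescent wII t ∧
  cs.length w = cs.length wII + cs.length wI

/-- `k_ε(J) = (−1)^{|J ∩ ε⁻¹(0)|}` for a set `J` of generators. -/
noncomputable def kSet (ε : B → Bool) (J : Set B) : ℤ :=
  (-1) ^ (J ∩ {i | ε i = false}).ncard

/-- `k_ε(w) = k_ε(𝓛(w)) · k_ε(𝓡(w))`. -/
noncomputable def kElt (ε : B → Bool) (w : W) : ℤ :=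
  kSet ε (leftDescents cs w) * kSet ε (rightDescents cs w)

/-!
Removing a right descent `s` from `w` cannot create longer commuting factors. Conversely let
`w = w₁ * w₂ * w₃` be reduced with `w₂` a commuting product, and let `t` be a right descent of
`w * s` with `m(s,t) ≠ 2`. By strong exchange, an element with two noncommuting right descents
is a reduced product ending in their longest element, so distinct right descents of a fully
commutative element commute. Hence a right descent that is not one of `w₃` commutes with `w₃` and
is a right descent of `w₁ * w₂`, and `s` can be removed from `w₃`, from `w₁`, or from `w₂`. Only
in the last case is the commuting factor damaged, and then `t`, which is a descent of neither `w₃`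
nor the rest of `w₂`, commutes with both and can be moved from `w₁` to the place of `s`. Left star
reductions follow by inversion.

The argument rests on two facts: `s * t` has order exactly `m(s,t)`, as seen in the geometric
representation, and strong exchange holds, as seen in the action of `W` on signed reflections.
-/

section GeometricRepresentation

-- At `n = m` and `n = m + 1` the left-hand side gives, up to the factor `sin (2 * θ) ^ 2`, the two
-- scalars in `Module.reflection_mul_reflection_pow_apply`.
open Polynomial.Chebyshev in
theorem eval_S_mul_add_mul_sin_sq (θ : ℝ) (n : ℤ) :
    (S ℝ ((n - 2) / 2)).eval (2 * Real.cos (2 * θ)) *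
        ((S ℝ ((n - 1) / 2)).eval (2 * Real.cos (2 * θ)) +
          (S ℝ ((n - 3) / 2)).eval (2 * Real.cos (2 * θ))) * Real.sin (2 * θ) ^ 2 =
      2 * Real.cos θ * Real.sin (n * θ) * Real.sin ((n - 1) * θ) := by
  have hS (k : ℤ) := S_two_mul_real_cos (2 * θ) k
  rcases Int.even_or_odd' n with ⟨k, rfl | rfl⟩
  · rw [show (2 * k - 2) / 2 = k - 1 by lia, show (2 * k - 1) / 2 = k - 1 by lia,
      show (2 * k - 3) / 2 = k - 2 by lia]
    have hsum : Real.sin (2 * k * θ) + Real.sin ((2 * k - 2) * θ) =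
        2 * Real.sin ((2 * k - 1) * θ) * Real.cos θ := by
      rw [Real.sin_add_sin]; ring_nf
    have h₁ := hS (k - 1)
    have h₂ := hS (k - 2)
    push_cast at h₁ h₂ ⊢
    rw [show ((k : ℝ) - 1 + 1) * (2 * θ) = 2 * k * θ by ring] at h₁
    rw [show ((k : ℝ) - 2 + 1) * (2 * θ) = (2 * k - 2) * θ by ring] at h₂
    rw [sq, mul_mul_mul_comm, add_mul, h₁, h₂, hsum]
    ring
  · rw [show (2 * k + 1 - 2) / 2 = k - 1 by lia, show (2 * k + 1 - 1) / 2 = k by lia,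
      show (2 * k + 1 - 3) / 2 = k - 1 by lia]
    have hsum : Real.sin ((2 * k + 2) * θ) + Real.sin (2 * k * θ) =
        2 * Real.sin ((2 * k + 1) * θ) * Real.cos θ := by
      rw [Real.sin_add_sin]; ring_nf
    have h₁ := hS k
    have h₂ := hS (k - 1)
    push_cast at h₁ h₂ ⊢
    rw [show ((k : ℝ) + 1) * (2 * θ) = (2 * k + 2) * θ by ring] at h₁
    rw [show ((k : ℝ) - 1 + 1) * (2 * θ) = 2 * k * θ by ring] at h₂
    rw [sq, mul_mul_mul_comm, add_mul, h₁, h₂, hsum]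
    ring_nf

open Polynomial.Chebyshev in
theorem cos_mul_eq_one_of_eval_S {φ : ℝ} (hφ : Real.sin φ ≠ 0) {n : ℤ}
    (h₀ : (S ℝ (n - 1)).eval (2 * Real.cos φ) = 0) (h₁ : (S ℝ n).eval (2 * Real.cos φ) = 1) :
    Real.cos (n * φ) = 1 := by
  have hsin : Real.sin (n * φ) = 0 := by
    simpa [h₀] using (S_two_mul_real_cos φ (n - 1)).symm
  have hadd := S_two_mul_real_cos φ n
  rw [h₁, one_mul, add_one_mul, Real.sin_add, hsin, zero_mul, zero_add] at hadd
  exact mul_right_cancel₀ hφ (by rw [one_mul, ← hadd])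

theorem two_mul_cos_sq_sub_two (θ : ℝ) : (2 * Real.cos θ) ^ 2 - 2 = 2 * Real.cos (2 * θ) := by
  rw [Real.cos_two_mul]; ring

theorem reflection_mul_reflection_pow_eq_one {V : Type*} [AddCommGroup V] [Module ℝ V]
    {f g : Module.Dual ℝ V} {x y : V} (hf : f x = 2) (hg : g y = 2) {θ : ℝ} {m : ℕ}
    (hθ : Real.sin (2 * θ) ≠ 0) (hm : Real.sin (m * θ) = 0)
    (hfg : f y * g x = (2 * Real.cos θ) ^ 2) :
    (Module.reflection hf * Module.reflection hg) ^ m = 1 := by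
  have h₁ := eval_S_mul_add_mul_sin_sq θ m
  have h₂ := eval_S_mul_add_mul_sin_sq θ (m + 1)
  rw [show (m : ℤ) + 1 - 2 = m - 1 by ring, show (m : ℤ) + 1 - 1 = m by ring,
    show (m : ℤ) + 1 - 3 = m - 2 by ring] at h₂
  push_cast at h₁ h₂
  rw [hm, mul_zero, zero_mul, mul_eq_zero_iff_right (pow_ne_zero 2 hθ)] at h₁
  rw [add_sub_cancel_right, hm, mul_zero, mul_eq_zero_iff_right (pow_ne_zero 2 hθ)] at h₂
  ext1 v
  rw [Module.reflection_mul_reflection_pow_apply hf hg m v, hfg, two_mul_cos_sq_sub_two, h₁, h₂]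
  simp

/-- The coroot `α_s^∨` of the geometric representation of a Coxeter group on `B →₀ ℝ`, whose simple
roots are the basis vectors. When `M s t = 0` encodes `∞`, the junk value `π / 0 = 0` gives the
customary `⟨α_s^∨, α_t⟩ = -2`. -/
noncomputable def simpleCoroot (M : CoxeterMatrix B) (s : B) : Module.Dual ℝ (B →₀ ℝ) :=
  Finsupp.linearCombination ℝ fun t => -2 * Real.cos (Real.pi / (M s t : ℝ))

theorem simpleCoroot_single (s t : B) :
    simpleCoroot M s (Finsupp.single t 1) = -2 * Real.cos (Real.pi / (M s t : ℝ)) := by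
  simp [simpleCoroot]

theorem simpleCoroot_single_self (s : B) : simpleCoroot M s (Finsupp.single s 1) = 2 := by
  simp [simpleCoroot_single]

theorem simpleCoroot_mul_simpleCoroot (s t : B) :
    simpleCoroot M s (Finsupp.single t 1) * simpleCoroot M t (Finsupp.single s 1) =
      (2 * Real.cos (Real.pi / (M s t : ℝ))) ^ 2 := by
  rw [simpleCoroot_single, simpleCoroot_single, M.symmetric t s]
  ring

/-- The action of the generator `s` in the geometric representation. -/
noncomputable def simpleReflection (M : CoxeterMatrix B) (s : B) : (B →₀ ℝ) ≃ₗ[ℝ] (B →₀ ℝ) :=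
  Module.reflection (simpleCoroot_single_self (M := M) s)

theorem sin_two_mul_pi_div_ne_zero {m : ℕ} (hm : 3 ≤ m) : Real.sin (2 * (Real.pi / m)) ≠ 0 := by
  have hm' : (3 : ℝ) ≤ m := by exact_mod_cast hm
  refine (Real.sin_pos_of_pos_of_lt_pi (by positivity) ?_).ne'
  rw [mul_div_left_comm]
  exact mul_lt_of_lt_one_right Real.pi_pos ((div_lt_one (by linarith)).2 (by linarith))

theorem cos_pi_div_ne_zero {m : ℕ} (hm : 3 ≤ m) : Real.cos (Real.pi / m) ≠ 0 := by
  have hm' : (2 : ℝ) < m := by exact_mod_cast hm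
  have hpos : 0 ≤ Real.pi / m := by positivity
  exact (Real.cos_pos_of_mem_Ioo
    ⟨by linarith [Real.pi_pos], div_lt_div_of_pos_left Real.pi_pos two_pos hm'⟩).ne'

theorem isLiftable_simpleReflection : M.IsLiftable (simpleReflection M) := by
  intro s t
  obtain h0 | h1 | h2 | h3 : M s t = 0 ∨ M s t = 1 ∨ M s t = 2 ∨ 3 ≤ M s t := by lia
  · rw [h0, pow_zero]
  · obtain rfl : s = t := by_contra fun hst => M.off_diagonal s t hst h1
    rw [h1, pow_one, mul_eq_one_iff_inv_eq, simpleReflection, Module.reflection_inv]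
  · ext1 v
    rw [simpleReflection, simpleReflection, Module.reflection_mul_reflection_pow_apply,
      simpleCoroot_single, simpleCoroot_single, M.symmetric t s]
    simp [h2]
    module
  · refine reflection_mul_reflection_pow_eq_one (simpleCoroot_single_self s)
      (simpleCoroot_single_self t) (sin_two_mul_pi_div_ne_zero h3) ?_
      (simpleCoroot_mul_simpleCoroot s t)
    rw [mul_div_cancel₀ _ (by positivity), Real.sin_pi]

/-- The geometric representation of a Coxeter group. -/
noncomputable def geometricRepresentation : W →* ((B →₀ ℝ) ≃ₗ[ℝ] (B →₀ ℝ)) :=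
  cs.lift ⟨simpleReflection M, isLiftable_simpleReflection⟩

open Polynomial.Chebyshev in
theorem eval_S_of_simple_mul_simple_pow_eq_one {s t : B} (hst : s ≠ t) {n : ℕ}
    (h : (cs.simple s * cs.simple t) ^ n = 1) :
    (S ℝ n).eval (2 * Real.cos (2 * (Real.pi / M s t))) +
        (S ℝ (n - 1)).eval (2 * Real.cos (2 * (Real.pi / M s t))) = 1 ∧
      (S ℝ (n - 1)).eval (2 * Real.cos (2 * (Real.pi / M s t))) *
        Real.cos (Real.pi / M s t) = 0 := by
  have hroot := congrArg (fun w => geometricRepresentation cs w (Finsupp.single s 1)) h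
  simp only [geometricRepresentation, map_pow, map_mul, map_one, lift_apply_simple,
    simpleReflection, Module.reflection_mul_reflection_pow_apply_self, LinearEquiv.coe_one,
    simpleCoroot_mul_simpleCoroot, two_mul_cos_sq_sub_two, id_eq] at hroot
  have hs := DFunLike.congr_fun hroot s
  have ht := DFunLike.congr_fun hroot t
  constructor
  · simpa [hst] using hs
  · simpa [hst, simpleCoroot_single, M.symmetric t s] using ht

open Polynomial.Chebyshev in
theorem coxeterMatrix_dvd_of_simple_mul_simple_pow_eq_one {s t : B} {n : ℕ}
    (h : (cs.simple s * cs.simple t) ^ n = 1) : M s t ∣ n := by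
  rcases eq_or_ne s t with rfl | hst
  · simp
  have h1 := M.off_diagonal s t hst
  obtain ⟨hs, ht⟩ := eval_S_of_simple_mul_simple_pow_eq_one cs hst h
  obtain h0 | h2 | h3 : M s t = 0 ∨ M s t = 2 ∨ 3 ≤ M s t := by lia
  · simpa [h0] using ht
  · have hneg : 2 * Real.cos (2 * (Real.pi / M s t)) = -2 := by
      rw [h2, Nat.cast_ofNat, mul_div_cancel₀ _ two_ne_zero, Real.cos_pi, mul_neg_one]
    rw [hneg, S_eval_neg_two, S_eval_neg_two, Int.negOnePow_sub, Int.negOnePow_one] at hs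
    push_cast at hs
    rw [h2, ← even_iff_two_dvd, ← Int.even_coe_nat, ← Int.negOnePow_eq_one_iff, ← Units.val_eq_one,
      ← Int.cast_inj (α := ℝ)]
    push_cast
    linarith
  · have hS := (mul_eq_zero_iff_right (cos_pi_div_ne_zero h3)).1 ht
    rw [hS, add_zero] at hs
    obtain ⟨k, hk⟩ := (Real.cos_eq_one_iff _).1
      (cos_mul_eq_one_of_eval_S (sin_two_mul_pi_div_ne_zero h3) hS hs)
    have hkn : (k * M s t : ℝ) = n := by
      field_simp [Real.pi_ne_zero, show (M s t : ℝ) ≠ 0 by positivity] at hk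
      exact_mod_cast hk
    exact Int.natCast_dvd_natCast.1 (Dvd.intro_left k (by exact_mod_cast hkn))

theorem orderOf_simple_mul_simple (s t : B) : orderOf (cs.simple s * cs.simple t) = M s t :=
  Nat.dvd_antisymm (orderOf_dvd_of_pow_eq_one (cs.simple_mul_simple_pow s t))
    (coxeterMatrix_dvd_of_simple_mul_simple_pow_eq_one cs (pow_orderOf_eq_one _))

theorem simple_injective : Function.Injective cs.simple := by
  intro s t h
  by_contra hst
  refine M.off_diagonal s t hst ?_
  rw [← orderOf_simple_mul_simple cs, h, simple_mul_simple_self, orderOf_one]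

end GeometricRepresentation

section StrongExchange

theorem rightInvSeq_alternatingWord (s t : B) (k : ℕ) :
    cs.rightInvSeq (alternatingWord s t k) =
      ((List.range k).map fun j => cs.simple t * (cs.simple s * cs.simple t) ^ j).reverse := by
  induction k generalizing s t with
  | zero => simp [alternatingWord]
  | succ k ih =>
    have hconj (j : ℕ) : MulAut.conj (cs.simple t) (cs.simple s * (cs.simple t * cs.simple s) ^ j) =
        cs.simple t * (cs.simple s * cs.simple t) ^ (j + 1) := by
      rw [MulAut.conj_apply, inv_simple, mul_assoc, mul_assoc, mul_pow_mul,
        ← mul_assoc (cs.simple s), ← pow_succ']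
    rw [alternatingWord_succ, rightInvSeq_concat, ih, List.range_succ_eq_map, List.map_cons,
      List.map_map, List.map_reverse, List.map_map, List.reverse_cons, List.concat_eq_append,
      pow_zero, mul_one]
    simp only [Function.comp_def, hconj]

theorem prod_map_alternatingWord_two_mul {G : Type*} [Monoid G] (f : B → G) (s t : B) (m : ℕ) :
    ((alternatingWord s t (2 * m)).map f).prod = (f s * f t) ^ m := by
  induction m with
  | zero => simp [alternatingWord]
  | succ m ih =>
    rw [mul_add_one, alternatingWord_succ', alternatingWord_succ', List.map_cons, List.map_cons,
      List.prod_cons, List.prod_cons, ih, pow_succ', mul_assoc]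
    simp

open Classical in
/-- The action of the generator `i` on signed group elements `W × ZMod 2`: conjugate by `i`, and
flip the sign of `i` itself. Lifted to `W`, it records the parity of the number of occurrences of a
reflection in the right inversion sequence of a word, which therefore depends only on the element
that the word represents. -/
noncomputable def signedConj (i : B) : Function.End (W × ZMod 2) := fun p =>
  (cs.simple i * p.1 * (cs.simple i)⁻¹, p.2 + if p.1 = cs.simple i then 1 else 0)

open Classical in
theorem signedConj_smul (i : B) (p : W × ZMod 2) :
    signedConj cs i • p =
      (cs.simple i * p.1 * (cs.simple i)⁻¹, p.2 + if p.1 = cs.simple i then 1 else 0) :=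
  rfl

open Classical in
theorem prod_map_signedConj_smul (ω : List B) (p : W × ZMod 2) :
    (ω.map (signedConj cs)).prod • p =
      (cs.wordProd ω * p.1 * (cs.wordProd ω)⁻¹, p.2 + ((cs.rightInvSeq ω).count p.1 : ℕ)) := by
  induction ω with
  | nil => simp
  | cons i ω ih =>
    have h : cs.wordProd ω * p.1 * (cs.wordProd ω)⁻¹ = cs.simple i ↔
        (cs.wordProd ω)⁻¹ * cs.simple i * cs.wordProd ω = p.1 := by
      rw [mul_inv_eq_iff_eq_mul, mul_assoc, inv_mul_eq_iff_eq_mul, eq_comm]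
    rw [List.map_cons, List.prod_cons, mul_smul, ih, signedConj_smul]
    ext
    · simp only [wordProd_cons, mul_inv_rev, mul_assoc]
    · simp only [rightInvSeq, List.count_cons, beq_iff_eq, h]
      push_cast
      ring

theorem isLiftable_signedConj : M.IsLiftable (signedConj cs) := by
  classical
  intro s t
  have hprod : cs.wordProd (alternatingWord s t (2 * M s t)) = 1 := by
    rw [wordProd, prod_map_alternatingWord_two_mul, simple_mul_simple_pow]
  have heven (r : W) : Even ((cs.rightInvSeq (alternatingWord s t (2 * M s t))).count r) := by
    rw [rightInvSeq_alternatingWord, List.count_reverse, two_mul, List.range_add, List.map_append,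
      List.count_append, List.map_map]
    simp only [Function.comp_def, pow_add, simple_mul_simple_pow, one_mul, Even.add_self]
  rw [← prod_map_alternatingWord_two_mul]
  refine eq_of_smul_eq_smul (α := W × ZMod 2) fun p => ?_
  rw [prod_map_signedConj_smul, hprod, (ZMod.natCast_eq_zero_iff_even).2 (heven _)]
  simp

/-- The action of `W` on signed group elements, extending `signedConj`. -/
noncomputable def signedConjHom : W →* Function.End (W × ZMod 2) :=
  cs.lift ⟨signedConj cs, isLiftable_signedConj cs⟩

open Classical in
theorem signedConjHom_wordProd_smul (ω : List B) (p : W × ZMod 2) :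
    signedConjHom cs (cs.wordProd ω) • p =
      (cs.wordProd ω * p.1 * (cs.wordProd ω)⁻¹, p.2 + ((cs.rightInvSeq ω).count p.1 : ℕ)) := by
  rw [← prod_map_signedConj_smul, wordProd, map_list_prod, List.map_map]
  congr 3
  ext1 i
  exact cs.lift_apply_simple (isLiftable_signedConj cs) i

theorem signedConjHom_smul_add (w r : W) (a b : ZMod 2) :
    signedConjHom cs w • (r, a + b) =
      ((signedConjHom cs w • (r, a)).1, (signedConjHom cs w • (r, a)).2 + b) := by
  obtain ⟨ω, rfl⟩ := cs.wordProd_surjective w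
  rw [signedConjHom_wordProd_smul, signedConjHom_wordProd_smul, add_right_comm]

theorem signedConjHom_smul_fst (w : W) (p : W × ZMod 2) :
    (signedConjHom cs w • p).1 = w * p.1 * w⁻¹ := by
  obtain ⟨ω, rfl⟩ := cs.wordProd_surjective w
  rw [signedConjHom_wordProd_smul]

theorem signedConjHom_reflection_smul {r : W} (hr : cs.IsReflection r) (a : ZMod 2) :
    signedConjHom cs r • (r, a) = (r, a + 1) := by
  obtain ⟨w, i, rfl⟩ := hr
  set r := w * cs.simple i * w⁻¹ with hr
  set b := (signedConjHom cs w⁻¹ • (r, a)).2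
  have hinv : signedConjHom cs w⁻¹ • (r, a) = (cs.simple i, b) := by
    refine Prod.ext ?_ rfl
    rw [signedConjHom_smul_fst, hr]
    group
  have hw : signedConjHom cs w • (cs.simple i, b) = (r, a) := by
    rw [← hinv, ← mul_smul, ← map_mul, mul_inv_cancel, map_one, one_smul]
  have hi : signedConjHom cs (cs.simple i) • (cs.simple i, b) = (cs.simple i, b + 1) := by
    rw [signedConjHom, lift_apply_simple, signedConj_smul]
    simp
  calc signedConjHom cs r • (r, a)
      = signedConjHom cs w • signedConjHom cs (cs.simple i) • signedConjHom cs w⁻¹ • (r, a) := by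
        rw [← mul_smul, ← mul_smul, ← map_mul, ← map_mul]
    _ = (r, a + 1) := by rw [hinv, hi, signedConjHom_smul_add, hw]

theorem mem_rightInvSeq_of_isRightInversion {ω : List B} {r : W}
    (h : cs.IsRightInversion (cs.wordProd ω) r) : r ∈ cs.rightInvSeq ω := by
  classical
  by_contra hr
  obtain ⟨ω', hω', hprod⟩ := cs.exists_isReduced (cs.wordProd ω * r)
  have hcount := congrArg Prod.snd (signedConjHom_wordProd_smul cs ω' (r, 0))
  rw [← hprod, map_mul, mul_smul, signedConjHom_reflection_smul cs h.1,
    signedConjHom_wordProd_smul, List.count_eq_zero_of_not_mem hr] at hcount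
  have hmem : r ∈ cs.rightInvSeq ω' := by
    by_contra hr'
    rw [List.count_eq_zero_of_not_mem hr'] at hcount
    simp at hcount
  have hlt := (cs.isRightInversion_of_mem_rightInvSeq hω' hmem).2
  rw [← hprod, mul_assoc, h.1.mul_self, mul_one] at hlt
  exact hlt.asymm h.2

end StrongExchange

section RightDescents

theorem mem_rightInvSeq_append {ω₁ ω₂ : List B} {r : W} :
    r ∈ cs.rightInvSeq (ω₁ ++ ω₂) ↔
      cs.wordProd ω₂ * r * (cs.wordProd ω₂)⁻¹ ∈ cs.rightInvSeq ω₁ ∨ r ∈ cs.rightInvSeq ω₂ := by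
  induction ω₁ with
  | nil => simp
  | cons i ω ih =>
    have hconj (x p q : W) : r = (p * q)⁻¹ * x * (p * q) ↔ q * r * q⁻¹ = p⁻¹ * x * p := by
      rw [mul_inv_eq_iff_eq_mul, ← eq_inv_mul_iff_mul_eq, mul_inv_rev]
      simp only [mul_assoc]
    rw [List.cons_append, rightInvSeq, rightInvSeq, List.mem_cons, List.mem_cons, ih, ← or_assoc,
      wordProd_append, hconj]

theorem length_mul_lt_of_mem_rightInvSeq {ω : List B} {r : W} (h : r ∈ cs.rightInvSeq ω) :
    cs.length (cs.wordProd ω * r) < ω.length := by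
  obtain ⟨j, hj, rfl⟩ := List.mem_iff_getElem.1 h
  rw [← List.getD_eq_getElem _ 1 hj, wordProd_mul_getD_rightInvSeq]
  rw [length_rightInvSeq] at hj
  refine (cs.length_wordProd_le _).trans_lt ?_
  rw [List.length_eraseIdx_of_lt hj]
  omega

theorem simple_notMem_rightInvSeq_alternatingWord {s t : B} {k : ℕ}
    (hk : M s t = 0 ∨ k < M s t) : cs.simple s ∉ cs.rightInvSeq (alternatingWord s t k) := by
  rw [rightInvSeq_alternatingWord, List.mem_reverse, List.mem_map]
  rintro ⟨j, hj, h⟩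
  rw [List.mem_range] at hj
  have hpow : (cs.simple s * cs.simple t) ^ (j + 1) = 1 := by
    rw [pow_succ', mul_assoc, h, simple_mul_simple_self]
  have hdvd := coxeterMatrix_dvd_of_simple_mul_simple_pow_eq_one cs hpow
  rcases hk with h0 | hk
  · rw [h0, zero_dvd_iff] at hdvd
    omega
  · have := Nat.le_of_dvd j.succ_pos hdvd
    omega

theorem exists_eq_mul_alternatingWord {x : W} {s t : B} (hs : cs.IsRightDescent x s)
    (ht : cs.IsRightDescent x t) {k : ℕ} (hk : M s t = 0 ∨ k ≤ M s t) :
    ∃ z, x = z * cs.wordProd (alternatingWord s t k) ∧ cs.length x = cs.length z + k := by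
  induction k generalizing s t with
  | zero => exact ⟨x, by simp [alternatingWord], rfl⟩
  | succ k ih =>
    obtain ⟨z, hx, hlx⟩ := ih ht hs (by rw [M.symmetric]; omega)
    obtain ⟨ω, hω, rfl⟩ := cs.exists_isReduced z
    set A := cs.wordProd (alternatingWord t s k) with hA
    have hmem : cs.simple t ∈ cs.rightInvSeq (ω ++ alternatingWord t s k) := by
      refine mem_rightInvSeq_of_isRightInversion cs ?_
      rwa [wordProd_append, ← hA, ← hx, isRightInversion_simple_iff_isRightDescent]
    rw [mem_rightInvSeq_append, ← hA] at hmem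
    have hlt := length_mul_lt_of_mem_rightInvSeq cs (hmem.resolve_right
      (simple_notMem_rightInvSeq_alternatingWord cs (by rw [M.symmetric]; omega)))
    have hx' : x = cs.wordProd ω * (A * cs.simple t * A⁻¹) *
        cs.wordProd (alternatingWord s t (k + 1)) := by
      rw [alternatingWord_succ, wordProd_concat, ← hA, hx]
      simp [mul_assoc]
    refine ⟨_, hx', ?_⟩
    have hle := cs.length_mul_le (cs.wordProd ω * (A * cs.simple t * A⁻¹))
      (cs.wordProd (alternatingWord s t (k + 1)))
    have hlen := cs.length_wordProd_le (alternatingWord s t (k + 1))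
    rw [length_alternatingWord] at hlen
    rw [← hx'] at hle
    rw [hω.eq] at hlx
    omega

theorem simple_commute {s t : B} (h : M s t = 2) : Commute (cs.simple s) (cs.simple t) := by
  have hpow := cs.simple_mul_simple_pow s t
  rwa [h, pow_two, mul_eq_one_iff_eq_inv, mul_inv_rev, inv_simple, inv_simple] at hpow

theorem isRightDescent_mul_simple {x : W} {s t : B} (hst : M s t = 2)
    (hs : cs.IsRightDescent x s) (ht : cs.IsRightDescent x t) :
    cs.IsRightDescent (x * cs.simple s) t := by
  obtain ⟨z, hz, hl⟩ := exists_eq_mul_alternatingWord cs hs ht (k := 2) (by omega)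
  have hxst : x * cs.simple s * cs.simple t = z := by
    rw [mul_assoc, (simple_commute cs hst).eq, hz]
    simp [alternatingWord, wordProd_cons, mul_assoc]
  have := cs.isRightDescent_iff.1 hs
  rw [IsRightDescent, hxst]
  omega

theorem isRightDescent_mul_of_right {a b : W} (h : cs.length (a * b) = cs.length a + cs.length b)
    {s : B} (hs : cs.IsRightDescent b s) : cs.IsRightDescent (a * b) s := by
  have := cs.length_mul_le a (b * cs.simple s)
  rw [IsRightDescent, mul_assoc]
  rw [IsRightDescent] at hs
  omega

theorem length_mul_eq_of_length_mul_mul_eq {a b c : W}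
    (h : cs.length (a * b * c) = cs.length a + cs.length b + cs.length c) :
    cs.length (a * b) = cs.length a + cs.length b ∧
      cs.length (a * b * c) = cs.length (a * b) + cs.length c := by
  have h₁ := cs.length_mul_le a b
  have h₂ := cs.length_mul_le (a * b) c
  omega

end RightDescents

section FullyCommutative

variable {cs}

theorem FullyComm.of_mul_left {a b : W} (h : FullyComm cs (a * b))
    (hl : cs.length (a * b) = cs.length a + cs.length b) : FullyComm cs a := by
  rintro ⟨s, t, hM, x₁, x₂, rfl, hla⟩
  refine h ⟨s, t, hM, x₁, x₂ * b, mul_assoc _ _ _, ?_⟩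
  have h₁ := cs.length_mul_le x₂ b
  have h₂ := cs.length_mul_le (x₁ * longest cs s t) (x₂ * b)
  have h₃ := cs.length_mul_le x₁ (longest cs s t)
  rw [← mul_assoc] at h₂
  omega

theorem FullyComm.coxeterMatrix_eq_two {x : W} (hx : FullyComm cs x) {s t : B} (hst : s ≠ t)
    (hs : cs.IsRightDescent x s) (ht : cs.IsRightDescent x t) : M s t = 2 := by
  have h1 := M.off_diagonal s t hst
  by_contra h2
  obtain h0 | h3 : M s t = 0 ∨ 3 ≤ M s t := by omega
  · obtain ⟨z, -, hl⟩ := exists_eq_mul_alternatingWord cs hs ht (k := cs.length x + 1) (.inl h0)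
    omega
  · obtain ⟨z, rfl, hl⟩ := exists_eq_mul_alternatingWord cs hs ht (.inr le_rfl)
    refine hx ⟨s, t, h3, z, 1, (mul_one _).symm, ?_⟩
    have hle := cs.length_mul_le z (longest cs s t)
    have hlen := cs.length_wordProd_le (alternatingWord s t (M s t))
    rw [length_alternatingWord] at hlen
    rw [length_one]
    rw [longest] at hle ⊢
    omega

theorem FullyComm.commute_and_isRightDescent {z y : W} {t : B} (hx : FullyComm cs (z * y))
    (hl : cs.length (z * y) = cs.length z + cs.length y) (ht : cs.IsRightDescent (z * y) t)
    (hy : ¬ cs.IsRightDescent y t) : Commute y (cs.simple t) ∧ cs.IsRightDescent z t := by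
  induction hn : cs.length y generalizing y with
  | zero =>
    obtain rfl := cs.length_eq_zero_iff.1 hn
    exact ⟨Commute.one_left _, by rwa [mul_one] at ht⟩
  | succ n ih =>
    obtain ⟨r, hr⟩ := cs.exists_rightDescent_of_ne_one
      (mt cs.length_eq_zero_iff.2 (hn.trans_ne n.succ_ne_zero))
    have hr' := isRightDescent_mul_of_right cs hl hr
    have hM : M r t = 2 := hx.coxeterMatrix_eq_two (fun h => hy (h ▸ hr)) hr' ht
    have ht' := isRightDescent_mul_simple cs hM hr' ht
    obtain ⟨v, rfl⟩ : ∃ v, y = v * cs.simple r := ⟨y * cs.simple r, by simp⟩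
    rw [IsRightDescent, simple_mul_simple_cancel_right] at hr
    rw [← mul_assoc] at hx hl hr' ht'
    have hlv := cs.isRightDescent_iff.1 hr'
    rw [simple_mul_simple_cancel_right] at ht' hlv
    have hle := cs.length_mul_le z v
    have hle' := cs.length_mul_le v (cs.simple r)
    rw [length_simple] at hle'
    have hv : ¬ cs.IsRightDescent v t := by
      intro hv
      have := cs.length_mul_le (v * cs.simple t) (cs.simple r)
      rw [length_simple, mul_assoc, ← (simple_commute cs hM).eq, ← mul_assoc] at this
      rw [IsRightDescent] at hv hy
      omega
    obtain ⟨hc, hz⟩ := ih (hx.of_mul_left (by rw [length_simple]; omega)) (by omega) ht' hv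
      (by omega)
    exact ⟨hc.mul_left (simple_commute cs hM), hz⟩

theorem longest_inv (s t : B) : (longest cs s t)⁻¹ = longest cs s t := by
  by_cases h : Even (M s t)
  · calc (longest cs s t)⁻¹ = longest cs t s := by
          rw [longest, longest, M.symmetric t s, prod_alternatingWord_eq_mul_pow,
            prod_alternatingWord_eq_mul_pow, if_pos h, if_pos h]
          simp [← inv_pow]
      _ = longest cs s t := cs.wordProd_braidWord_eq t s
  · rw [longest, prod_alternatingWord_eq_mul_pow, if_neg h, ← mul_pow_mul]
    simp [← inv_pow, mul_pow_mul]

theorem FullyComm.inv {w : W} (hw : FullyComm cs w) : FullyComm cs w⁻¹ := by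
  rintro ⟨s, t, hM, x₁, x₂, h, hl⟩
  refine hw ⟨s, t, hM, x₂⁻¹, x₁⁻¹, ?_, ?_⟩
  · rw [← inv_inv w, h, mul_inv_rev, mul_inv_rev, longest_inv, mul_assoc]
  · rw [length_inv] at hl
    rw [length_inv, length_inv]
    omega

end FullyCommutative

section CommutingWords

/-- A word is commuting if its letters are pairwise distinct and commute with each other; they are
distinct since `M i i = 1`. -/
def IsCommWord (M : CoxeterMatrix B) (l : List B) : Prop := l.Pairwise fun i j => M i j = 2

variable {cs}

theorem isCommWord_cons {s : B} {l : List B} :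
    IsCommWord M (s :: l) ↔ (∀ t ∈ l, M s t = 2) ∧ IsCommWord M l :=
  List.pairwise_cons

theorem IsCommWord.nodup {l : List B} (h : IsCommWord M l) : l.Nodup :=
  h.imp fun hij => by rintro rfl; simp at hij

theorem IsCommWord.coxeterMatrix_eq_two {l : List B} (h : IsCommWord M l) {s t : B} (hs : s ∈ l)
    (ht : t ∈ l) (hst : s ≠ t) : M s t = 2 :=
  have : Std.Symm fun i j => M i j = 2 := ⟨fun i j hij => by rwa [M.symmetric]⟩
  List.Pairwise.forall h hs ht hst

theorem IsCommWord.commute_simple {s : B} {l : List B} (h : IsCommWord M (s :: l)) :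
    Commute (cs.wordProd l) (cs.simple s) :=
  Commute.list_prod_left _ _ fun _ hx => by
    obtain ⟨t, ht, rfl⟩ := List.mem_map.1 hx
    exact (simple_commute cs ((isCommWord_cons.1 h).1 t ht)).symm

theorem IsCommWord.rightInvSeq_eq_map_simple {l : List B} (h : IsCommWord M l) :
    cs.rightInvSeq l = l.map cs.simple := by
  induction l with
  | nil => rfl
  | cons s l ih =>
    rw [rightInvSeq, List.map_cons, ih (isCommWord_cons.1 h).2, mul_assoc, ← h.commute_simple.eq,
      inv_mul_cancel_left]

theorem IsCommWord.mem_of_isRightDescent {l : List B} (h : IsCommWord M l) {s : B}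
    (hs : cs.IsRightDescent (cs.wordProd l) s) : s ∈ l := by
  rw [← isRightInversion_simple_iff_isRightDescent] at hs
  have hmem := mem_rightInvSeq_of_isRightInversion cs hs
  rwa [h.rightInvSeq_eq_map_simple, List.mem_map_of_injective (simple_injective cs)] at hmem

theorem IsCommWord.isReduced {l : List B} (h : IsCommWord M l) : cs.IsReduced l := by
  induction l with
  | nil => simp [CoxeterSystem.IsReduced]
  | cons s l ih =>
    have hs : ¬ cs.IsRightDescent (cs.wordProd l) s := fun hs =>
      (List.nodup_cons.1 h.nodup).1 ((isCommWord_cons.1 h).2.mem_of_isRightDescent hs)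
    rw [CoxeterSystem.IsReduced, wordProd_cons, ← h.commute_simple.eq,
      cs.not_isRightDescent_iff.1 hs, (ih (isCommWord_cons.1 h).2).eq, List.length_cons]

theorem IsCommWord.isRightDescent_of_mem {l : List B} (h : IsCommWord M l) {s : B} (hs : s ∈ l) :
    cs.IsRightDescent (cs.wordProd l) s := by
  rw [← isRightInversion_simple_iff_isRightDescent]
  apply cs.isRightInversion_of_mem_rightInvSeq h.isReduced
  rw [h.rightInvSeq_eq_map_simple]
  exact List.mem_map_of_mem hs

theorem IsCommWord.isCommProd {l : List B} (h : IsCommWord M l) : IsCommProd cs (cs.wordProd l) :=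
  ⟨l, h.nodup, fun _ hs _ ht => h.coxeterMatrix_eq_two hs ht, h.isReduced, rfl⟩

theorem IsCommProd.exists_isCommWord {w : W} (h : IsCommProd cs w) :
    ∃ l, IsCommWord M l ∧ w = cs.wordProd l := by
  obtain ⟨l, hnodup, hcomm, -, rfl⟩ := h
  exact ⟨l, hnodup.pairwise_of_forall_ne hcomm, rfl⟩

theorem IsCommProd.exists_isCommWord_cons {w : W} (h : IsCommProd cs w) {s : B}
    (hs : cs.IsRightDescent w s) : ∃ l, IsCommWord M (s :: l) ∧ w = cs.wordProd (s :: l) := by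
  obtain ⟨l, hl, rfl⟩ := h.exists_isCommWord
  obtain ⟨l₁, l₂, rfl⟩ := List.append_of_mem (hl.mem_of_isRightDescent hs)
  have hperm : (l₁ ++ s :: l₂).Perm (s :: (l₁ ++ l₂)) := List.perm_middle
  refine ⟨l₁ ++ l₂, hl.perm hperm fun hij => by rwa [M.symmetric], ?_⟩
  exact (hperm.map _).prod_eq' (hl.map _ fun _ _ => simple_commute cs)

theorem IsCommProd.inv {w : W} (h : IsCommProd cs w) : IsCommProd cs w⁻¹ := by
  obtain ⟨l, hnodup, hcomm, hred, rfl⟩ := h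
  exact ⟨l.reverse, List.nodup_reverse.2 hnodup, by simpa using hcomm, hred.reverse,
    (cs.wordProd_reverse l).symm⟩

end CommutingWords

section CommutingFactors

/-- The lengths of the commuting factors in reduced factorizations of `w`; `nval cs w` is their
supremum. -/
def commFactorLengths (w : W) : Set ℕ :=
  {k | ∃ w₁ w₂ w₃ : W, w = w₁ * w₂ * w₃ ∧
    cs.length w = cs.length w₁ + cs.length w₂ + cs.length w₃ ∧
    IsCommProd cs w₂ ∧ cs.length w₂ = k}

variable {cs}

theorem length_mem_commFactorLengths {a b c : W} (hb : IsCommProd cs b)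
    (hl : cs.length a + cs.length b + cs.length c ≤ cs.length (a * b * c)) :
    cs.length b ∈ commFactorLengths cs (a * b * c) := by
  have h₁ := cs.length_mul_le a b
  have h₂ := cs.length_mul_le (a * b) c
  exact ⟨a, b, c, rfl, by omega, hb, rfl⟩

theorem commFactorLengths_mul_simple_subset {w : W} {s : B} (hs : cs.IsRightDescent w s) :
    commFactorLengths cs (w * cs.simple s) ⊆ commFactorLengths cs w := by
  rintro _ ⟨a, b, c, hw, hl, hb, rfl⟩
  have hw' : w = a * b * (c * cs.simple s) := by
    rw [← mul_assoc, ← hw, simple_mul_simple_cancel_right]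
  have h₁ := cs.isRightDescent_iff.1 hs
  have h₂ := cs.length_mul_le c (cs.simple s)
  rw [length_simple] at h₂
  rw [hw']
  refine length_mem_commFactorLengths hb ?_
  rw [← hw']
  omega

theorem length_add_one_mem_commFactorLengths {a c : W} {l : List B} {t : B}
    (hx : FullyComm cs (a * cs.wordProd l * c)) (hl : IsCommWord M l)
    (hlen : cs.length (a * cs.wordProd l * c) = cs.length a + l.length + cs.length c)
    (ht : cs.IsRightDescent (a * cs.wordProd l * c) t) (htc : ¬ cs.IsRightDescent c t)
    (htl : t ∉ l) : l.length + 1 ∈ commFactorLengths cs (a * cs.wordProd l * c) := by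
  rw [← hl.isReduced.eq (cs := cs)] at hlen
  obtain ⟨hlen₁, hlen₂⟩ := length_mul_eq_of_length_mul_mul_eq cs hlen
  obtain ⟨-, ht₁⟩ := hx.commute_and_isRightDescent hlen₂ ht htc
  have hx₁ := hx.of_mul_left hlen₂
  obtain ⟨-, hta⟩ :=
    hx₁.commute_and_isRightDescent hlen₁ ht₁ fun h => htl (hl.mem_of_isRightDescent h)
  have htl' : IsCommWord M (t :: l) := isCommWord_cons.2 ⟨fun u hu =>
    hx₁.coxeterMatrix_eq_two (fun h => htl (h ▸ hu)) ht₁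
      (isRightDescent_mul_of_right cs hlen₁ (hl.isRightDescent_of_mem hu)), hl⟩
  have hfactor : a * cs.wordProd l * c = a * cs.simple t * cs.wordProd (t :: l) * c := by
    rw [wordProd_cons, ← mul_assoc, simple_mul_simple_cancel_right]
  have hlen_cons : cs.length (cs.wordProd (t :: l)) = l.length + 1 := htl'.isReduced
  have hlen_a := cs.isRightDescent_iff.1 hta
  rw [← hlen_cons, hfactor]
  refine length_mem_commFactorLengths htl'.isCommProd ?_
  rw [← hfactor, hlen_cons, hlen, hl.isReduced.eq]
  omega

theorem FullyComm.mul_simple {w : W} (hw : FullyComm cs w) {s : B} (hs : cs.IsRightDescent w s) :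
    FullyComm cs (w * cs.simple s) := by
  refine FullyComm.of_mul_left (b := cs.simple s) ?_ ?_ <;>
    rw [simple_mul_simple_cancel_right]
  · exact hw
  · rw [length_simple, cs.isRightDescent_iff.1 hs]

theorem subset_commFactorLengths_mul_simple {w : W} (hw : FullyComm cs w) {s t : B}
    (hst : M s t ≠ 2) (hs : cs.IsRightDescent w s) (ht : cs.IsRightDescent (w * cs.simple s) t) :
    commFactorLengths cs w ⊆ commFactorLengths cs (w * cs.simple s) := by
  have hlen_s := cs.isRightDescent_iff.1 hs
  rintro _ ⟨a, b, c, rfl, hlen, hb, rfl⟩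
  obtain ⟨hlen₁, hlen₂⟩ := length_mul_eq_of_length_mul_mul_eq cs hlen
  by_cases hsc : cs.IsRightDescent c s
  · have := cs.isRightDescent_iff.1 hsc
    rw [mul_assoc] at hlen_s ⊢
    exact length_mem_commFactorLengths hb (by omega)
  obtain ⟨hcs, hs₁⟩ := hw.commute_and_isRightDescent hlen₂ hs hsc
  have hws : a * b * c * cs.simple s = a * b * cs.simple s * c := by
    rw [mul_assoc, hcs.eq, ← mul_assoc]
  by_cases hsb : cs.IsRightDescent b s
  · obtain ⟨l, hsl, rfl⟩ := hb.exists_isCommWord_cons hsb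
    have hlen_cons : cs.length (cs.wordProd (s :: l)) = l.length + 1 := hsl.isReduced
    have hws' : a * cs.wordProd (s :: l) * c * cs.simple s = a * cs.wordProd l * c := by
      rw [hws, wordProd_cons, ← hsl.commute_simple.eq, ← mul_assoc,
        simple_mul_simple_cancel_right]
    have htc : ¬ cs.IsRightDescent c t := fun h => hst <| hw.coxeterMatrix_eq_two
      (fun hst' => hsc (hst' ▸ h)) hs (isRightDescent_mul_of_right cs hlen₂ h)
    have hx := hw.mul_simple hs
    rw [hws'] at hx ht hlen_s ⊢
    rw [hlen_cons]
    exact length_add_one_mem_commFactorLengths hx (isCommWord_cons.1 hsl).2 (by omega) ht htc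
      fun h => hst ((isCommWord_cons.1 hsl).1 t h)
  · obtain ⟨hbs, hsa⟩ := (hw.of_mul_left hlen₂).commute_and_isRightDescent hlen₁ hs₁ hsb
    have := cs.isRightDescent_iff.1 hsa
    have hws' : a * b * cs.simple s * c = a * cs.simple s * b * c := by
      rw [mul_assoc a, hbs.eq, ← mul_assoc]
    rw [hws, hws'] at hlen_s ⊢
    exact length_mem_commFactorLengths hb (by omega)

theorem Noncomm.symm {s t : B} (h : Noncomm M s t) : Noncomm M t s := by
  rwa [Noncomm, M.symmetric]

theorem Noncomm.coxeterMatrix_ne_two {s t : B} (h : Noncomm M s t) : M s t ≠ 2 := by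
  rcases h with h | h <;> omega

theorem FullyComm.nval_mul_simple {w : W} (hw : FullyComm cs w) {s t : B}
    (hst : M s t ≠ 2) (hs : cs.IsRightDescent w s) (ht : cs.IsRightDescent (w * cs.simple s) t) :
    nval cs (w * cs.simple s) = nval cs w :=
  congrArg sSup ((commFactorLengths_mul_simple_subset hs).antisymm
    (subset_commFactorLengths_mul_simple hw hst hs ht))

theorem RightStarReducible.nval_eq {s t : B} {w x : W} (h : RightStarReducible cs s t w x)
    (hw : FullyComm cs w) : nval cs x = nval cs w := by
  obtain ⟨hst, ⟨hs, -, rfl, ht⟩ | ⟨ht, -, rfl, hs⟩⟩ := h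
  · exact hw.nval_mul_simple hst.coxeterMatrix_ne_two hs ht
  · exact hw.nval_mul_simple hst.symm.coxeterMatrix_ne_two ht hs

theorem LeftStarReducible.inv {s t : B} {w x : W} (h : LeftStarReducible cs s t w x) :
    RightStarReducible cs s t w⁻¹ x⁻¹ := by
  simp only [LeftStarReducible, RightStarReducible, isRightDescent_inv_iff] at h ⊢
  refine h.imp_right (Or.imp ?_ ?_) <;>
  · rintro ⟨h₁, h₂, rfl, h₃⟩
    exact ⟨h₁, h₂, by rw [mul_inv_rev, inv_simple], h₃⟩

theorem nval_inv (w : W) : nval cs w⁻¹ = nval cs w := by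
  have hsub (v : W) : commFactorLengths cs v ⊆ commFactorLengths cs v⁻¹ := by
    rintro _ ⟨a, b, c, rfl, hl, hb, rfl⟩
    rw [← cs.length_inv b, mul_inv_rev, mul_inv_rev, ← mul_assoc]
    refine length_mem_commFactorLengths hb.inv ?_
    rw [mul_assoc, ← mul_inv_rev, ← mul_inv_rev]
    simp only [length_inv]
    omega
  have hsub' := hsub w⁻¹
  rw [inv_inv] at hsub'
  exact congrArg sSup (hsub'.antisymm (hsub w))

end CommutingFactors

/-- Lemma 7.2: if `w ∈ W_c` is left (or right) star reducible to `x ∈ W_c`, then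
`n(x) = n(w)`. -/
theorem statement7 (w x : W) (hw : FullyComm cs w) (hx : FullyComm cs x)
    (h : ∃ s t : B, LeftStarReducible cs s t w x ∨ RightStarReducible cs s t w x) :
    nval cs x = nval cs w := by
  obtain ⟨s, t, h | h⟩ := h
  · rw [← nval_inv x, ← nval_inv w]
    exact h.inv.nval_eq hw.inv
  · exact h.nval_eq hw
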